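/- arXiv:2602.06944 — 2 statements merged into one kernel-verified Lean document; each statement's English description precedes it below -/
import Mathlib

section
/- Suppose K is a stabilizing derivative-feedback gain, P is a symmetric positive definite solution of the policy-evaluation equation for K, K⁺ = −R⁻¹ Bᵀ A⁻ᵀ P, and P⁺ is a symmetric positive definite solution of the policy-evaluation equation for K⁺. Then P − P⁺ is positive semidefinite, i.e., the value matrices decrease monotonically in the Loewner order under policy iteration. -/
open Matrix MeasureTheory Filter Topology

/-- A real square matrix is Hurwitz if every complex eigenvalue has strictly
negative real part. -/
def IsHurwitz {n : ℕ} (M : Matrix (Fin n) (Fin n) ℝ) : Prop :=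
  ∀ μ ∈ spectrum ℂ (M.map (Complex.ofReal)), μ.re < 0

/-- A derivative-feedback gain `K` is stabilizing if `I + B * K` is invertible
and `(I + B * K)⁻¹ * A` is Hurwitz. -/
def IsStabilizing {n m : ℕ} (A : Matrix (Fin n) (Fin n) ℝ) (B : Matrix (Fin n) (Fin m) ℝ)
    (K : Matrix (Fin m) (Fin n) ℝ) : Prop :=
  IsUnit (1 + B * K) ∧ IsHurwitz ((1 + B * K)⁻¹ * A)

/-- The policy-evaluation (Lyapunov) equation for the gain `K`:
`P (A⁻¹(I + BK)) + (A⁻¹(I + BK))ᵀ P + Q + Kᵀ R K = 0`. -/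
def PolicyEval {n m : ℕ} (A : Matrix (Fin n) (Fin n) ℝ) (B : Matrix (Fin n) (Fin m) ℝ)
    (Q : Matrix (Fin n) (Fin n) ℝ) (R : Matrix (Fin m) (Fin m) ℝ)
    (K : Matrix (Fin m) (Fin n) ℝ) (P : Matrix (Fin n) (Fin n) ℝ) : Prop :=
  P * (A⁻¹ * (1 + B * K)) + (A⁻¹ * (1 + B * K))ᵀ * P + Q + Kᵀ * R * K = 0

/-- The policy-improvement update: `K⁺ = −R⁻¹ Bᵀ A⁻ᵀ P`. -/
noncomputable def ImprovedGain {n m : ℕ} (A : Matrix (Fin n) (Fin n) ℝ) (B : Matrix (Fin n) (Fin m) ℝ)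
    (R : Matrix (Fin m) (Fin m) ℝ) (P : Matrix (Fin n) (Fin n) ℝ) :
    Matrix (Fin m) (Fin n) ℝ :=
  -(R⁻¹ * Bᵀ * (A⁻¹)ᵀ * P)

/-- The derivative-feedback algebraic Riccati equation:
`P A⁻¹ + A⁻ᵀ P − P A⁻¹ B R⁻¹ Bᵀ A⁻ᵀ P + Q = 0`. -/
def SolvesARE {n m : ℕ} (A : Matrix (Fin n) (Fin n) ℝ) (B : Matrix (Fin n) (Fin m) ℝ)
    (Q : Matrix (Fin n) (Fin n) ℝ) (R : Matrix (Fin m) (Fin m) ℝ)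
    (P : Matrix (Fin n) (Fin n) ℝ) : Prop :=
  P * A⁻¹ + (A⁻¹)ᵀ * P - P * A⁻¹ * B * R⁻¹ * Bᵀ * (A⁻¹)ᵀ * P + Q = 0

/-!
With `F_K = A⁻¹(I + BK)`, policy evaluation is a Lyapunov equation, and `K` is stabilizing exactly
when `F_K` is Hurwitz. Completing the square in the equation for `P` around `L = K⁺` gives
`P F_L + F_Lᵀ P + Q + Lᵀ R L + (L - K)ᵀ R (L - K) = 0`. An eigenvector of `F_L` with eigenvalue of
nonnegative real part would lie in the kernel of `L - K`, hence would be an eigenvector of the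
Hurwitz matrix `F_K`; so `F_L` is Hurwitz. Subtracting the equation for `P⁺` leaves
`(P - P⁺) F_L + F_Lᵀ (P - P⁺) = -(L - K)ᵀ R (L - K) ≤ 0`, and Lyapunov's theorem gives `P ≥ P⁺`.

The Cayley transform `c = (1 + f)(1 - f)⁻¹` reduces Lyapunov's theorem to its discrete form:
`d f + f* d ≤ 0` becomes `c* d c ≤ d`, whence `d ≥ (c*)ᵏ d cᵏ → 0`.
-/

theorem tendsto_pow_atTop_nhds_zero_of_spectralRadius_lt_one {A : Type*} [NormedRing A]
    [NormedAlgebra ℂ A] [CompleteSpace A] {c : A} (hc : spectralRadius ℂ c < 1) :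
    Tendsto (fun k : ℕ ↦ c ^ k) atTop (𝓝 0) := by
  obtain ⟨r, hcr, hr⟩ := ENNReal.lt_iff_exists_nnreal_btwn.mp hc
  have hbound : ∀ᶠ k : ℕ in atTop, ‖c ^ k‖ ≤ (r : ℝ) ^ k := by
    have hgelfand := spectrum.pow_nnnorm_pow_one_div_tendsto_nhds_spectralRadius c
    filter_upwards [hgelfand.eventually_lt_const hcr, eventually_gt_atTop 0] with k hk hk0
    rw [one_div, ENNReal.rpow_inv_lt_iff (by positivity), ENNReal.rpow_natCast] at hk
    exact_mod_cast hk.le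
  exact squeeze_zero_norm' hbound
    (tendsto_pow_atTop_nhds_zero_of_lt_one r.coe_nonneg (by exact_mod_cast hr))

theorem nonneg_of_star_mul_mul_le {A : Type*} [CStarAlgebra A] [PartialOrder A]
    [StarOrderedRing A] {c d : A} (hc : spectralRadius ℂ c < 1)
    (h : star c * d * c ≤ d) : 0 ≤ d := by
  have hiter (k : ℕ) : star (c ^ k) * d * c ^ k ≤ d := by
    induction k with
    | zero => simp
    | succ k ih =>
      calc star (c ^ (k + 1)) * d * c ^ (k + 1) = star c * (star (c ^ k) * d * c ^ k) * c := by
            simp only [pow_succ, star_mul, mul_assoc]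
        _ ≤ star c * d * c := star_left_conjugate_le_conjugate ih c
        _ ≤ d := h
  have hpow := tendsto_pow_atTop_nhds_zero_of_spectralRadius_lt_one hc
  have hlim : Tendsto (fun k : ℕ ↦ star (c ^ k) * d * c ^ k) atTop (𝓝 0) := by
    simpa using (hpow.star.mul_const d).mul hpow
  exact le_of_tendsto' hlim hiter

/-- The Cayley transform `(1 + f)(1 - f)⁻¹`, which turns continuous-time stability (spectrum in the
open left half-plane) into discrete-time stability (spectrum in the open unit disc). It is only
meaningful when `1 - f` is a unit, as `Ring.inverse` is zero elsewhere. -/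
noncomputable def cayleyTransform {A : Type*} [Ring A] (f : A) : A :=
  (1 + f) * Ring.inverse (1 - f)

theorem cayleyTransform_mul_one_sub {A : Type*} [Ring A] {f : A} (hf : IsUnit (1 - f)) :
    cayleyTransform f * (1 - f) = 1 + f := by
  rw [cayleyTransform, mul_assoc, Ring.inverse_mul_cancel _ hf, mul_one]

theorem mem_spectrum_of_mem_spectrum_cayleyTransform {𝕜 A : Type*} [Field 𝕜] [NeZero (2 : 𝕜)]
    [Ring A] [Algebra 𝕜 A] {f : A} (hf : IsUnit (1 - f)) {z : 𝕜}
    (hz : z ∈ spectrum 𝕜 (cayleyTransform f)) : z + 1 ≠ 0 ∧ (z - 1) / (z + 1) ∈ spectrum 𝕜 f := by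
  have hfactor : (algebraMap 𝕜 A z - cayleyTransform f) * (1 - f) =
      algebraMap 𝕜 A (z - 1) - (z + 1) • f := by
    rw [sub_mul, cayleyTransform_mul_one_sub hf]
    simp only [Algebra.algebraMap_eq_smul_one, mul_sub, mul_one, smul_mul_assoc, one_mul, sub_smul,
      add_smul, one_smul]
    abel
  have hsing : ¬IsUnit (algebraMap 𝕜 A (z - 1) - (z + 1) • f) := by
    rwa [← hfactor, IsUnit.mul_right_iff hf]
  have hz1 : z + 1 ≠ 0 := by
    intro h
    refine hsing ?_
    rw [h, zero_smul, sub_zero, eq_neg_of_add_eq_zero_left h]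
    have htwo : (-1 - 1 : 𝕜) ≠ 0 := by
      rw [← neg_add', one_add_one_eq_two]
      exact neg_ne_zero.mpr two_ne_zero
    exact htwo.isUnit.map (algebraMap 𝕜 A)
  refine ⟨hz1, fun hunit ↦ hsing ?_⟩
  rw [spectrum.mem_resolventSet_iff] at hunit
  convert hunit.smul (Units.mk0 _ hz1) using 1
  rw [Units.smul_mk0, smul_sub, Algebra.algebraMap_eq_smul_one, Algebra.algebraMap_eq_smul_one,
    smul_smul, mul_div_cancel₀ _ hz1]

theorem norm_lt_one_of_re_sub_one_div_add_one_lt_zero {z : ℂ}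
    (hz : ((z - 1) / (z + 1)).re < 0) : ‖z‖ < 1 := by
  have hre : ((z - 1) / (z + 1)).re = (Complex.normSq z - 1) / Complex.normSq (z + 1) := by
    simp only [Complex.div_re, Complex.normSq_apply, Complex.sub_re, Complex.add_re, Complex.one_re,
      Complex.sub_im, Complex.add_im, Complex.one_im]
    ring
  rw [hre] at hz
  have hnormSq : Complex.normSq z - 1 < 0 := by
    by_contra! h
    exact hz.not_ge (div_nonneg h (Complex.normSq_nonneg _))
  rwa [sub_neg, Complex.normSq_eq_norm_sq, sq_lt_one_iff₀ (norm_nonneg z)] at hnormSq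

theorem spectralRadius_cayleyTransform_lt_one {A : Type*} [NormedRing A] [NormedAlgebra ℂ A]
    [CompleteSpace A] {f : A} (hf : IsUnit (1 - f)) (hre : ∀ μ ∈ spectrum ℂ f, μ.re < 0) :
    spectralRadius ℂ (cayleyTransform f) < 1 := by
  cases subsingleton_or_nontrivial A
  · simp [Subsingleton.elim (cayleyTransform f) 0]
  · refine spectrum.spectralRadius_lt_of_forall_lt (r := 1) _ fun z hz ↦ ?_
    exact norm_lt_one_of_re_sub_one_div_add_one_lt_zero
      (hre _ (mem_spectrum_of_mem_spectrum_cayleyTransform hf hz).2)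

theorem nonneg_of_lyapunov {A : Type*} [CStarAlgebra A] [PartialOrder A] [StarOrderedRing A]
    {f d : A} (hf : ∀ μ ∈ spectrum ℂ f, μ.re < 0) (h : d * f + star f * d ≤ 0) : 0 ≤ d := by
  have hunit : IsUnit (1 - f) := by
    have h1 : (1 : ℂ) ∉ spectrum ℂ f := fun h1 ↦ (hf 1 h1).not_ge (by simp)
    simpa using spectrum.notMem_iff.mp h1
  set c := cayleyTransform f with hc
  have hconj : star (1 - f) * (d - star c * d * c) * (1 - f) =
      (2 : ℕ) • -(d * f + star f * d) :=
    calc star (1 - f) * (d - star c * d * c) * (1 - f)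
      _ = star (1 - f) * d * (1 - f) - star (c * (1 - f)) * d * (c * (1 - f)) := by
          rw [star_mul]; noncomm_ring
      _ = star (1 - f) * d * (1 - f) - star (1 + f) * d * (1 + f) := by
          rw [hc, cayleyTransform_mul_one_sub hunit]
      _ = (2 : ℕ) • -(d * f + star f * d) := by
          rw [star_sub, star_add, star_one]; noncomm_ring
  refine nonneg_of_star_mul_mul_le (spectralRadius_cayleyTransform_lt_one hunit hf) ?_
  rw [← sub_nonneg, ← hunit.star_left_conjugate_nonneg_iff, hconj]
  exact nsmul_nonneg (neg_nonneg.mpr h) 2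

open scoped ComplexOrder

section Complexification

variable {n m 𝕜 : Type*} [RCLike 𝕜]

theorem conjTranspose_map_algebraMap (M : Matrix m n ℝ) :
    (M.map (algebraMap ℝ 𝕜))ᴴ = Mᵀ.map (algebraMap ℝ 𝕜) := by
  rw [← conjTranspose_map _ algebraMap_star_comm, conjTranspose_eq_transpose_of_trivial]

variable [Finite n]

theorem posSemidef_map_algebraMap_iff {M : Matrix n n ℝ} :
    (M.map (algebraMap ℝ 𝕜)).PosSemidef ↔ M.PosSemidef := by
  classical
  have := Fintype.ofFinite n
  constructor <;> intro hM
  · have hM_symm : M.IsHermitian :=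
      (isHermitian_map_iff algebraMap_star_comm (algebraMap ℝ 𝕜).injective).mp hM.isHermitian
    refine .of_dotProduct_mulVec_nonneg hM_symm fun x ↦ ?_
    have hx : star (algebraMap ℝ 𝕜 ∘ x) = algebraMap ℝ 𝕜 ∘ star x := by
      ext i; simp
    have hform := hM.dotProduct_mulVec_nonneg (algebraMap ℝ 𝕜 ∘ x)
    have hmul : M.map (algebraMap ℝ 𝕜) *ᵥ (algebraMap ℝ 𝕜 ∘ x) = algebraMap ℝ 𝕜 ∘ (M *ᵥ x) :=
      funext fun i ↦ ((algebraMap ℝ 𝕜).map_mulVec M x i).symm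
    rwa [hx, hmul, ← RingHom.map_dotProduct, RCLike.algebraMap_eq_ofReal,
      RCLike.ofReal_nonneg] at hform
  · open scoped MatrixOrder in
    obtain ⟨N, rfl⟩ := CStarAlgebra.nonneg_iff_eq_star_mul_self.mp hM.nonneg
    rw [Matrix.map_mul, star_eq_conjTranspose, conjTranspose_eq_transpose_of_trivial,
      ← conjTranspose_map_algebraMap]
    exact posSemidef_conjTranspose_mul_self _

theorem posDef_map_algebraMap {M : Matrix n n ℝ} (hM : M.PosDef) :
    (M.map (algebraMap ℝ 𝕜)).PosDef := by
  classical
  have := Fintype.ofFinite n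
  exact (posSemidef_map_algebraMap_iff.mpr hM.posSemidef).posDef_iff_isUnit.mpr
    (hM.isUnit.map (algebraMap ℝ 𝕜).mapMatrix)

end Complexification

section DetectableLyapunov

variable {n m : Type*} [Fintype n] [Fintype m]

theorem lyapunov_energy_of_mulVec_eq_smul {S : Type*} [CommRing S] [StarRing S]
    {P F M : Matrix n n S} {C : Matrix m n S} {R : Matrix m m S}
    (hlyap : P * F + Fᴴ * P + M + Cᴴ * R * C = 0) {μ : S} {x : n → S} (hFx : F *ᵥ x = μ • x) :
    (μ + star μ) * (star x ⬝ᵥ P *ᵥ x) + star x ⬝ᵥ M *ᵥ x +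
      star (C *ᵥ x) ⬝ᵥ R *ᵥ (C *ᵥ x) = 0 := by
  have hFHx : star x ⬝ᵥ Fᴴ *ᵥ (P *ᵥ x) = star μ * (star x ⬝ᵥ P *ᵥ x) := by
    rw [dotProduct_mulVec, ← star_mulVec, hFx, star_smul, smul_dotProduct, smul_eq_mul]
  have hCHx : star x ⬝ᵥ Cᴴ *ᵥ (R *ᵥ (C *ᵥ x)) = star (C *ᵥ x) ⬝ᵥ R *ᵥ (C *ᵥ x) := by
    rw [dotProduct_mulVec, ← star_mulVec]
  have hform := congrArg (fun N ↦ star x ⬝ᵥ N *ᵥ x) hlyap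
  simp only [add_mulVec, ← mulVec_mulVec, hFx, mulVec_smul, dotProduct_add, dotProduct_smul,
    smul_eq_mul, hFHx, hCHx, zero_mulVec, dotProduct_zero] at hform
  rwa [add_mul]

theorem re_lt_zero_of_detectable_of_lyapunov [DecidableEq n] {P F M : Matrix n n ℂ}
    {C : Matrix m n ℂ} {R : Matrix m m ℂ} {Y : Matrix n m ℂ} (hP : P.PosSemidef)
    (hM : M.PosSemidef) (hR : R.PosDef) (hlyap : P * F + Fᴴ * P + M + Cᴴ * R * C = 0)
    (hdet : ∀ μ ∈ spectrum ℂ (F - Y * C), μ.re < 0) : ∀ μ ∈ spectrum ℂ F, μ.re < 0 := by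
  intro μ hμ
  by_contra! hre
  rw [← spectrum_toLin', ← Module.End.hasEigenvalue_iff_mem_spectrum] at hμ
  obtain ⟨x, hx⟩ := hμ.exists_hasEigenvector
  have hFx : F *ᵥ x = μ • x := by simpa using hx.apply_eq_smul
  have hCx : C *ᵥ x = 0 := by
    by_contra hCx
    have hμ_nonneg : 0 ≤ μ + star μ := by
      rw [Complex.star_def, Complex.add_conj]
      exact_mod_cast mul_nonneg zero_le_two hre
    have hpos := hR.dotProduct_mulVec_pos hCx
    exact (add_pos_of_nonneg_of_pos (add_nonneg (mul_nonneg hμ_nonneg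
      (hP.dotProduct_mulVec_nonneg x)) (hM.dotProduct_mulVec_nonneg x)) hpos).ne'
      (lyapunov_energy_of_mulVec_eq_smul hlyap hFx)
  have heigen : Module.End.HasEigenvector (toLin' (F - Y * C)) μ x := by
    refine ⟨Module.End.mem_eigenspace_iff.mpr ?_, hx.2⟩
    rw [toLin'_apply, sub_mulVec, ← mulVec_mulVec, hCx, mulVec_zero, sub_zero, hFx]
  refine (hdet μ ?_).not_ge hre
  rw [← spectrum_toLin']
  exact (Module.End.hasEigenvalue_of_hasEigenvector heigen).mem_spectrum

end DetectableLyapunov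

section Hurwitz

variable {n m : ℕ} {F P M : Matrix (Fin n) (Fin n) ℝ}

theorem IsHurwitz.isUnit (hF : IsHurwitz F) : IsUnit F := by
  have hmap : IsUnit ((algebraMap ℝ ℂ).mapMatrix F) := by
    rw [← spectrum.zero_notMem_iff ℂ]
    exact fun h0 ↦ (hF 0 h0).false
  rw [isUnit_iff_isUnit_det, ← RingHom.map_det] at hmap
  exact F.isUnit_iff_isUnit_det.mpr (isUnit_of_map_unit _ _ hmap)

theorem IsHurwitz.inv (hF : IsHurwitz F) : IsHurwitz F⁻¹ := by
  obtain ⟨u, rfl⟩ := hF.isUnit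
  intro μ hμ
  rw [← coe_units_inv] at hμ
  have hμ' : μ ∈ spectrum ℂ (↑(Units.map (algebraMap ℝ ℂ).mapMatrix.toMonoidHom u)⁻¹ :
      Matrix (Fin n) (Fin n) ℂ) := hμ
  rw [← spectrum.map_inv, Set.mem_inv] at hμ'
  have hre := hF _ hμ'
  rw [Complex.inv_re] at hre
  by_contra! h
  exact hre.not_ge (div_nonneg h (Complex.normSq_nonneg μ))

open scoped MatrixOrder Matrix.Norms.L2Operator in
theorem IsHurwitz.posSemidef_of_lyapunov (hF : IsHurwitz F) (hM : M.PosSemidef)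
    (hlyap : P * F + Fᵀ * P + M = 0) : P.PosSemidef := by
  rw [← posSemidef_map_algebraMap_iff (𝕜 := ℂ), ← nonneg_iff_posSemidef] at hM ⊢
  refine nonneg_of_lyapunov hF ?_
  have hlyap_map := congrArg (·.map (algebraMap ℝ ℂ)) hlyap
  simp only [Matrix.map_add _ (map_add _), Matrix.map_mul, ← conjTranspose_map_algebraMap,
    Matrix.map_zero _ (map_zero _)] at hlyap_map
  exact (eq_neg_of_add_eq_zero_left hlyap_map).trans_le (neg_nonpos.mpr hM)

theorem isHurwitz_of_detectable_of_lyapunov {C : Matrix (Fin m) (Fin n) ℝ}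
    {R : Matrix (Fin m) (Fin m) ℝ} {Y : Matrix (Fin n) (Fin m) ℝ} (hP : P.PosSemidef)
    (hM : M.PosSemidef) (hR : R.PosDef) (hlyap : P * F + Fᵀ * P + M + Cᵀ * R * C = 0)
    (hdet : IsHurwitz (F - Y * C)) : IsHurwitz F := by
  have hlyap_map := congrArg (·.map (algebraMap ℝ ℂ)) hlyap
  simp only [Matrix.map_add _ (map_add _), Matrix.map_mul, ← conjTranspose_map_algebraMap,
    Matrix.map_zero _ (map_zero _)] at hlyap_map
  refine re_lt_zero_of_detectable_of_lyapunov (F := F.map (algebraMap ℝ ℂ))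
    (Y := Y.map (algebraMap ℝ ℂ)) (posSemidef_map_algebraMap_iff.mpr hP)
    (posSemidef_map_algebraMap_iff.mpr hM) (posDef_map_algebraMap hR) hlyap_map ?_
  rwa [← Matrix.map_mul, ← Matrix.map_sub _ (map_sub _)]

end Hurwitz

theorem posSemidef_transpose_mul_mul {m n : Type*} [Fintype m] [Finite n] {R : Matrix m m ℝ}
    (hR : R.PosSemidef) (K : Matrix m n ℝ) : (Kᵀ * R * K).PosSemidef :=
  K.conjTranspose_eq_transpose_of_trivial ▸ hR.conjTranspose_mul_mul_same K

section PolicyIteration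

variable {n m : ℕ} {A Q P : Matrix (Fin n) (Fin n) ℝ} {B : Matrix (Fin n) (Fin m) ℝ}
  {R : Matrix (Fin m) (Fin m) ℝ} {K : Matrix (Fin m) (Fin n) ℝ}

theorem isStabilizing_iff_isHurwitz_inv_mul :
    IsStabilizing A B K ↔ IsHurwitz (A⁻¹ * (1 + B * K)) := by
  refine ⟨fun ⟨hunit, hF⟩ ↦ ?_, fun hF ↦ ?_⟩
  · rw [isUnit_iff_isUnit_det] at hunit
    simpa only [Matrix.mul_inv_rev, nonsing_inv_nonsing_inv _ hunit] using hF.inv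
  · have hdet := (isUnit_iff_isUnit_det _).mp hF.isUnit
    rw [det_mul, IsUnit.mul_iff, ← isUnit_iff_isUnit_det, isUnit_nonsing_inv_iff,
      isUnit_iff_isUnit_det, ← isUnit_iff_isUnit_det (1 + B * K)] at hdet
    refine ⟨hdet.2, ?_⟩
    simpa only [Matrix.mul_inv_rev, nonsing_inv_nonsing_inv _ hdet.1] using hF.inv

theorem IsStabilizing.posSemidef_of_policyEval (hK : IsStabilizing A B K) (hQ : Q.PosSemidef)
    (hR : R.PosDef) (hPE : PolicyEval A B Q R K P) : P.PosSemidef := by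
  refine (isStabilizing_iff_isHurwitz_inv_mul.mp hK).posSemidef_of_lyapunov
    (hQ.add (posSemidef_transpose_mul_mul hR.posSemidef K)) ?_
  rw [← add_assoc]
  exact hPE

theorem mul_improvedGain (hR : IsUnit R) : R * ImprovedGain A B R P = -((A⁻¹ * B)ᵀ * P) := by
  rw [isUnit_iff_isUnit_det] at hR
  simp only [ImprovedGain, Matrix.mul_neg, transpose_mul, Matrix.mul_assoc,
    mul_nonsing_inv_cancel_left _ _ hR]

theorem PolicyEval.complete_square {L : Matrix (Fin m) (Fin n) ℝ} (hR : R.IsHermitian)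
    (hP : P.IsHermitian) (hRL : R * L = -((A⁻¹ * B)ᵀ * P)) (hPE : PolicyEval A B Q R K P) :
    P * (A⁻¹ * (1 + B * L)) + (A⁻¹ * (1 + B * L))ᵀ * P + (Q + Lᵀ * R * L) +
      (L - K)ᵀ * R * (L - K) = 0 := by
  rw [← neg_eq_iff_eq_neg, eq_comm] at hRL
  rw [IsHermitian, conjTranspose_eq_transpose_of_trivial] at hR hP
  have hLR : P * (A⁻¹ * B) = -(Lᵀ * R) := by
    simpa only [transpose_mul, transpose_neg, transpose_transpose, hP, hR] using
      congrArg transpose hRL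
  have hexpand (N : Matrix (Fin m) (Fin n) ℝ) :
      P * (A⁻¹ * (1 + B * N)) + (A⁻¹ * (1 + B * N))ᵀ * P =
        P * A⁻¹ + (A⁻¹)ᵀ * P - Lᵀ * R * N - Nᵀ * R * L := by
    have hF : A⁻¹ * (1 + B * N) = A⁻¹ + A⁻¹ * B * N := by
      rw [Matrix.mul_add, Matrix.mul_one, Matrix.mul_assoc]
    rw [hF, transpose_add, transpose_mul (A⁻¹ * B), Matrix.mul_add, Matrix.add_mul,
      Matrix.mul_assoc Nᵀ, hRL, ← Matrix.mul_assoc P (A⁻¹ * B), hLR]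
    simp only [Matrix.neg_mul, Matrix.mul_neg, Matrix.mul_assoc]
    abel
  unfold PolicyEval at hPE
  rw [hexpand] at hPE ⊢
  rw [← hPE]
  simp only [transpose_sub, Matrix.sub_mul, Matrix.mul_sub]
  abel

theorem IsStabilizing.improvedGain (hK : IsStabilizing A B K) (hQ : Q.PosSemidef) (hR : R.PosDef)
    (hPE : PolicyEval A B Q R K P) : IsStabilizing A B (ImprovedGain A B R P) := by
  have hP := hK.posSemidef_of_policyEval hQ hR hPE
  have hlyap := hPE.complete_square hR.isHermitian hP.isHermitian (mul_improvedGain hR.isUnit)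
  set L := ImprovedGain A B R P
  have hdet : A⁻¹ * (1 + B * L) - A⁻¹ * B * (L - K) = A⁻¹ * (1 + B * K) := by
    simp only [Matrix.mul_add, Matrix.mul_sub, Matrix.mul_assoc]
    abel
  rw [isStabilizing_iff_isHurwitz_inv_mul] at hK ⊢
  exact isHurwitz_of_detectable_of_lyapunov hP
    (hQ.add (posSemidef_transpose_mul_mul hR.posSemidef L)) hR hlyap (hdet ▸ hK)

end PolicyIteration

theorem policy_iteration_monotone_general {n m : ℕ}
    (A : Matrix (Fin n) (Fin n) ℝ) (B : Matrix (Fin n) (Fin m) ℝ)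
    (Q : Matrix (Fin n) (Fin n) ℝ) (R : Matrix (Fin m) (Fin m) ℝ)
    (hQ : Q.PosSemidef) (hR : R.PosDef)
    (K : Matrix (Fin m) (Fin n) ℝ) (P Pplus : Matrix (Fin n) (Fin n) ℝ)
    (hK : IsStabilizing A B K) (hPE : PolicyEval A B Q R K P)
    (hPEplus : PolicyEval A B Q R (ImprovedGain A B R P) Pplus) :
    (P - Pplus).PosSemidef := by
  have hP := hK.posSemidef_of_policyEval hQ hR hPE
  have hsquare := hPE.complete_square hR.isHermitian hP.isHermitian (mul_improvedGain hR.isUnit)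
  have hstab := isStabilizing_iff_isHurwitz_inv_mul.mp (hK.improvedGain hQ hR hPE)
  refine hstab.posSemidef_of_lyapunov
    (posSemidef_transpose_mul_mul hR.posSemidef (ImprovedGain A B R P - K)) ?_
  rw [← sub_eq_zero_of_eq (hsquare.trans hPEplus.symm)]
  simp only [Matrix.sub_mul, Matrix.mul_sub]
  abel

/-- Loewner monotonicity of policy iteration: if `P > 0` solves the
policy-evaluation equation for a stabilizing gain `K`, `K⁺ = −R⁻¹ Bᵀ A⁻ᵀ P`,
and `P⁺ > 0` solves the policy-evaluation equation for `K⁺`, then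
`P − P⁺` is positive semidefinite. -/
theorem policy_iteration_monotone {n m : ℕ} (hn : 0 < n) (hm : 0 < m)
    (A : Matrix (Fin n) (Fin n) ℝ) (B : Matrix (Fin n) (Fin m) ℝ)
    (Q : Matrix (Fin n) (Fin n) ℝ) (R : Matrix (Fin m) (Fin m) ℝ)
    (hA : IsUnit A) (hQ : Q.PosSemidef) (hR : R.PosDef)
    (K : Matrix (Fin m) (Fin n) ℝ) (P Pplus : Matrix (Fin n) (Fin n) ℝ)
    (hK : IsStabilizing A B K) (hP : P.PosDef)
    (hPE : PolicyEval A B Q R K P)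
    (hPplus : Pplus.PosDef)
    (hPEplus : PolicyEval A B Q R (ImprovedGain A B R P) Pplus) :
    (P - Pplus).PosSemidef :=
  policy_iteration_monotone_general A B Q R hQ hR K P Pplus hK hPE hPEplus
end

section
/- Let K be a stabilizing derivative-feedback gain and P a symmetric positive definite solution of the policy-evaluation equation for K. Let x : ℝ → ℝⁿ be differentiable with x'(t) = (I + B·K)⁻¹·A · x(t) for all t (the closed-loop trajectory). Then for every t the improper integral ∫ₜ^∞ x'(τ)ᵀ (Q + Kᵀ R K) x'(τ) dτ converges and equals x(t)ᵀ P x(t). -/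
open Matrix MeasureTheory Filter Topology

/-!
Write `M = (I + BK)⁻¹A` and `S = Q + KᵀRK`. Multiplying the policy-evaluation equation by `Mᵀ` on
the left and by `M` on the right turns it into the Lyapunov equation `PM + MᵀP + MᵀSM = 0`, so
along a trajectory `xᵀPx` is an antiderivative of `-(x')ᵀSx'`. A linear flow with spectrum in the
open left half-plane decays exponentially: peeling one factor `X - λ` at a time off an annihilating
polynomial reduces this to the scalar equation `y' = λy + z` with `z` already decaying. Hence both
`xᵀPx` and the integrand decay exponentially, and the fundamental theorem of calculus on `(t, ∞)`
gives the value of the integral.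
-/

open Asymptotics Polynomial

section ExponentialDecay

variable {E F G : Type*} [NormedAddCommGroup E] [NormedAddCommGroup F] [NormedAddCommGroup G]

/-- Exponential decay at `+∞`, at some unspecified positive rate. -/
def HasExpDecay (f : ℝ → E) : Prop :=
  ∃ ε > 0, f =O[atTop] fun t => Real.exp (-ε * t)

namespace HasExpDecay

theorem tendsto_zero {f : ℝ → E} (hf : HasExpDecay f) : Tendsto f atTop (𝓝 0) := by
  obtain ⟨ε, hε, hO⟩ := hf
  exact hO.trans_tendsto <| Real.tendsto_exp_atBot.comp <|
    tendsto_id.const_mul_atTop_of_neg (neg_lt_zero.2 hε)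

theorem integrableOn_Ioi {f : ℝ → ℝ} (hf : HasExpDecay f) {a : ℝ}
    (hcont : ContinuousOn f (Set.Ici a)) : IntegrableOn f (Set.Ioi a) := by
  obtain ⟨ε, hε, hO⟩ := hf
  exact integrable_of_isBigO_exp_neg hε hcont hO

theorem bilinear {𝕜 : Type*} [NontriviallyNormedField 𝕜] [NormedSpace 𝕜 E] [NormedSpace 𝕜 F]
    [NormedSpace 𝕜 G] (β : E →L[𝕜] F →L[𝕜] G) {f : ℝ → E} {g : ℝ → F}
    (hf : HasExpDecay f) (hg : HasExpDecay g) :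
    HasExpDecay fun t => β (f t) (g t) := by
  obtain ⟨ε, hε, hfO⟩ := hf
  obtain ⟨δ, hδ, hgO⟩ := hg
  refine ⟨ε + δ, by positivity, ?_⟩
  calc (fun t => β (f t) (g t))
      =O[atTop] fun t => ‖f t‖ * ‖g t‖ := β.isBoundedBilinearMap.isBigO_comp
    _ =O[atTop] fun t => Real.exp (-ε * t) * Real.exp (-δ * t) := hfO.norm_left.mul hgO.norm_left
    _ = fun t => Real.exp (-(ε + δ) * t) := by
      funext t
      rw [← Real.exp_add]
      ring_nf

end HasExpDecay

theorem isBigO_exp_of_hasDerivAt [NormedSpace ℝ E] {f f' : ℝ → E} {d : ℝ} (hd : 0 < d)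
    (hf : ∀ᶠ t in atTop, HasDerivAt f (f' t) t)
    (hf' : f' =O[atTop] fun t => Real.exp (d * t)) :
    f =O[atTop] fun t => Real.exp (d * t) := by
  obtain ⟨c, hc, hbound⟩ := hf'.exists_pos
  obtain ⟨a, ha⟩ := eventually_atTop.1
    ((hf.and hbound.bound).and (eventually_ge_atTop (0 : ℝ)))
  set b : ℝ → ℝ := fun t => ‖f a‖ + c / d * Real.exp (d * t)
  have hb (t : ℝ) : HasDerivAt b (c * Real.exp (d * t)) t := by
    refine ((((hasDerivAt_id t).const_mul d).exp.const_mul (c / d)).const_add ‖f a‖).congr_deriv ?_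
    simp only [id, mul_one]
    field_simp
  refine IsBigO.of_bound (‖f a‖ + c / d) ((eventually_ge_atTop a).mono fun t hat => ?_)
  rw [Real.norm_of_nonneg (Real.exp_nonneg _)]
  calc ‖f t‖ ≤ b t :=
        image_norm_le_of_norm_deriv_right_le_deriv_boundary (B := b)
          (fun u hu => (ha u hu.1).1.1.continuousAt.continuousWithinAt)
          (fun u hu => (ha u hu.1).1.1.hasDerivWithinAt)
          (le_add_of_nonneg_right (by positivity)) hb
          (fun u hu => by
            simpa only [Real.norm_of_nonneg (Real.exp_nonneg _)] using (ha u hu.1).1.2)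
          (Set.right_mem_Icc.2 hat)
    _ ≤ ‖f a‖ * Real.exp (d * t) + c / d * Real.exp (d * t) := by
        simp only [b]
        gcongr
        exact le_mul_of_one_le_right (norm_nonneg _)
          (Real.one_le_exp (mul_nonneg hd.le (ha t hat).2))
    _ = (‖f a‖ + c / d) * Real.exp (d * t) := by ring

end ExponentialDecay

section LinearODE

variable {E : Type*} [NormedAddCommGroup E] [NormedSpace ℂ E]

theorem isBigO_cexp_smul {f : ℝ → E} {a : ℝ} (hf : f =O[atTop] fun t => Real.exp (a * t)) (μ : ℂ) :
    (fun t : ℝ => Complex.exp (μ * t) • f t) =O[atTop] fun t => Real.exp ((μ.re + a) * t) := by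
  have hexp : (fun t : ℝ => Complex.exp (μ * t)) =O[atTop] fun t => Real.exp (μ.re * t) :=
    .of_norm_eventuallyLE <| .of_forall fun t => by
      simp only [Complex.norm_exp, Complex.re_mul_ofReal, le_refl]
  simpa only [smul_eq_mul, ← Real.exp_add, ← add_mul] using hexp.smul hf

theorem hasDerivAt_cexp_neg_smul {y : ℝ → E} {v : E} {t : ℝ} (hy : HasDerivAt y v t) (l : ℂ) :
    HasDerivAt (fun s : ℝ => Complex.exp (-l * s) • y s)
      (Complex.exp (-l * t) • (v - l • y t)) t := by
  have hexp : HasDerivAt (fun s : ℝ => Complex.exp (-l * s)) (Complex.exp (-l * t) * -l) t := by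
    simpa only [id, Complex.ofReal_one, mul_one] using
      ((hasDerivAt_id t).ofReal_comp.const_mul (-l)).cexp
  refine (hexp.smul hy).congr_deriv ?_
  module

theorem HasExpDecay.of_deriv_sub_smul {l : ℂ} (hl : l.re < 0) {y y' : ℝ → E}
    (hy : ∀ᶠ t in atTop, HasDerivAt y (y' t) t)
    (hdecay : HasExpDecay fun t => y' t - l • y t) : HasExpDecay y := by
  obtain ⟨ε₀, hε₀, hO⟩ := hdecay
  -- Strictness of `ε < -l.re` is what lets the bound `exp ((-l.re - ε) * t)` on the derivative
  -- of `exp (-l * t) • y t` survive integration.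
  obtain ⟨ε, hε, hεlt⟩ := exists_between (lt_min hε₀ (neg_pos.2 hl))
  obtain ⟨hεε₀, hεl⟩ := lt_min_iff.1 hεlt
  have hforcing : (fun t => y' t - l • y t) =O[atTop] fun t => Real.exp (-ε * t) :=
    hO.trans <| .of_norm_eventuallyLE <| (eventually_ge_atTop 0).mono fun t ht => by
      simp only [Real.norm_of_nonneg (Real.exp_nonneg _)]
      gcongr
  have hrescaled : (fun t : ℝ => Complex.exp (-l * t) • y t) =O[atTop]
      fun t => Real.exp (((-l).re + -ε) * t) :=
    isBigO_exp_of_hasDerivAt (by simpa using hεl)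
      (hy.mono fun t ht => hasDerivAt_cexp_neg_smul ht l) (isBigO_cexp_smul hforcing (-l))
  refine ⟨ε, hε, ?_⟩
  simpa [smul_smul, ← Complex.exp_add] using isBigO_cexp_smul hrescaled l

theorem HasExpDecay.of_aeval_eq_zero (T : E →L[ℂ] E) {p : ℂ[X]}
    (hp : ∀ μ, p.IsRoot μ → μ.re < 0) {y : ℝ → E}
    (hy : ∀ᶠ t in atTop, HasDerivAt y (T (y t)) t)
    (hpy : ∀ᶠ t in atTop, aeval T p (y t) = 0) : HasExpDecay y := by
  induction hdeg : p.natDegree generalizing p y with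
  | zero =>
    obtain ⟨c, rfl⟩ := natDegree_eq_zero.1 hdeg
    have hc : c ≠ 0 := by
      rintro rfl
      simpa using hp 0 (by simp)
    refine ⟨1, one_pos, IsBigO.of_bound 0 (hpy.mono fun t ht => ?_)⟩
    simpa [Algebra.algebraMap_eq_smul_one, hc] using ht
  | succ k ih =>
    obtain ⟨l, hl⟩ := IsAlgClosed.exists_root p fun h => by
      simp [natDegree_eq_of_degree_eq_some h] at hdeg
    obtain ⟨q, rfl⟩ := dvd_iff_isRoot.2 hl
    have hT (v : E) : aeval T (X - C l) v = T v - l • v := by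
      simp [Algebra.algebraMap_eq_smul_one]
    refine .of_deriv_sub_smul (hp l hl) hy (ih (p := q) ?_ ?_ ?_ ?_)
    · exact fun μ hμ => hp μ (hμ.dvd (dvd_mul_left _ _))
    · filter_upwards [hy] with t ht
      rw [map_sub, map_smul]
      exact ((T.restrictScalars ℝ).hasFDerivAt.comp_hasDerivAt t ht).sub (ht.const_smul l)
    · filter_upwards [hpy] with t ht
      rw [← hT, ← mul_apply_eq_comp, ← map_mul, mul_comm, ht]
    · have hq : q ≠ 0 := by
        rintro rfl
        simp at hdeg
      rw [natDegree_mul (X_sub_C_ne_zero l) hq, natDegree_X_sub_C] at hdeg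
      lia

end LinearODE

section Hurwitz

variable {n : ℕ} {M : Matrix (Fin n) (Fin n) ℝ}

theorem IsHurwitz.isUnit_s4 (hM : IsHurwitz M) : IsUnit M := by
  have hunit : IsUnit (M.map Complex.ofReal) :=
    (spectrum.zero_notMem_iff ℂ).1 fun h0 => lt_irrefl 0 (hM 0 h0)
  rw [isUnit_iff_isUnit_det] at hunit ⊢
  have hdet : (M.map Complex.ofReal).det = M.det := (Complex.ofRealHom.map_det M).symm
  simpa [hdet] using hunit

theorem IsHurwitz.hasExpDecay (hM : IsHurwitz M) {x : ℝ → Fin n → ℝ}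
    (hx : ∀ᶠ t in atTop, HasDerivAt x (M *ᵥ x t) t) : HasExpDecay x := by
  set Mc := M.map Complex.ofReal
  let φ := (toLinAlgEquiv' (R := ℂ) (n := Fin n)).trans (Module.End.toContinuousLinearMap _)
  have hdecay : HasExpDecay fun t i => (x t i : ℂ) := by
    refine .of_aeval_eq_zero (φ Mc) (p := Mc.charpoly)
      (fun μ hμ => hM μ (mem_spectrum_iff_isRoot_charpoly.2 hμ)) ?_ (.of_forall fun t => ?_)
    · filter_upwards [hx] with t ht
      refine hasDerivAt_pi.2 fun i => (hasDerivAt_pi.1 ht i).ofReal_comp.congr_deriv ?_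
      exact Complex.ofRealHom.map_mulVec M (x t) i
    · rw [aeval_algHom_apply, aeval_self_charpoly, map_zero, _root_.zero_apply]
  obtain ⟨ε, hε, hO⟩ := hdecay
  refine ⟨ε, hε, isBigO_pi.2 fun i => ?_⟩
  simpa only [Complex.norm_real, isBigO_norm_left] using (isBigO_pi.1 hO i).norm_left

end Hurwitz

section Lyapunov

variable {ι κ : Type*} [Fintype ι] [Fintype κ]

theorem hasDerivAt_dotProduct_mulVec (P : Matrix ι κ ℝ) {x : ℝ → ι → ℝ} {y : ℝ → κ → ℝ}
    {x' : ι → ℝ} {y' : κ → ℝ} {t : ℝ} (hx : HasDerivAt x x' t) (hy : HasDerivAt y y' t) :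
    HasDerivAt (fun τ => x τ ⬝ᵥ P *ᵥ y τ) (x t ⬝ᵥ P *ᵥ y' + x' ⬝ᵥ P *ᵥ y t) t := by
  classical
  simpa only [LinearMap.toContinuousBilinearMap_apply, toLinearMap₂'_apply'] using
    (toLinearMap₂' ℝ P).toContinuousBilinearMap.hasDerivAt_of_bilinear (fun _ => hx) fun _ => hy

theorem HasExpDecay.dotProduct_mulVec (P : Matrix ι κ ℝ) {x : ℝ → ι → ℝ} {y : ℝ → κ → ℝ}
    (hx : HasExpDecay x) (hy : HasExpDecay y) : HasExpDecay fun t => x t ⬝ᵥ P *ᵥ y t := by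
  classical
  simpa only [LinearMap.toContinuousBilinearMap_apply, toLinearMap₂'_apply'] using
    HasExpDecay.bilinear (toLinearMap₂' ℝ P).toContinuousBilinearMap hx hy

theorem hasDerivAt_lyapunov {M P W : Matrix ι ι ℝ} (hP : P * M + Mᵀ * P + W = 0)
    {x : ℝ → ι → ℝ} {t : ℝ} (hx : HasDerivAt x (M *ᵥ x t) t) :
    HasDerivAt (fun τ => x τ ⬝ᵥ P *ᵥ x τ) (-(x t ⬝ᵥ W *ᵥ x t)) t := by
  refine (hasDerivAt_dotProduct_mulVec P hx hx).congr_deriv ?_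
  calc x t ⬝ᵥ P *ᵥ (M *ᵥ x t) + (M *ᵥ x t) ⬝ᵥ P *ᵥ x t
      = x t ⬝ᵥ (P * M + Mᵀ * P) *ᵥ x t := by
        rw [add_mulVec, dotProduct_add, ← mulVec_mulVec, ← mulVec_mulVec,
          dotProduct_transpose_mulVec, dotProduct_comm (P *ᵥ x t)]
    _ = -(x t ⬝ᵥ W *ᵥ x t) := by
        rw [eq_neg_of_add_eq_zero_left hP, neg_mulVec, dotProduct_neg]

theorem lyapunov_integral {M P W : Matrix ι ι ℝ} (hP : P * M + Mᵀ * P + W = 0)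
    {x : ℝ → ι → ℝ} (hdecay : HasExpDecay x) {t : ℝ}
    (hx : ∀ τ ≥ t, HasDerivAt x (M *ᵥ x τ) τ) :
    IntegrableOn (fun τ => x τ ⬝ᵥ W *ᵥ x τ) (Set.Ioi t) ∧
      ∫ τ in Set.Ioi t, x τ ⬝ᵥ W *ᵥ x τ = x t ⬝ᵥ P *ᵥ x t := by
  have hint : IntegrableOn (fun τ => x τ ⬝ᵥ W *ᵥ x τ) (Set.Ioi t) :=
    (hdecay.dotProduct_mulVec W hdecay).integrableOn_Ioi fun τ hτ =>
      (hasDerivAt_dotProduct_mulVec W (hx τ hτ) (hx τ hτ)).continuousAt.continuousWithinAt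
  have hftc := integral_Ioi_of_hasDerivAt_of_tendsto' (fun τ hτ => hasDerivAt_lyapunov hP (hx τ hτ))
    hint.neg (hdecay.dotProduct_mulVec P hdecay).tendsto_zero
  rw [integral_neg, zero_sub, neg_inj] at hftc
  exact ⟨hint, hftc⟩

theorem lyapunov_of_inverse_lyapunov {α : Type*} [CommRing α] [DecidableEq ι]
    {M N P S : Matrix ι ι α} (hNM : N * M = 1) (hP : P * N + Nᵀ * P + S = 0) :
    P * M + Mᵀ * P + Mᵀ * S * M = 0 := by
  have hMN : Mᵀ * Nᵀ = 1 := by rw [← transpose_mul, hNM, transpose_one]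
  calc P * M + Mᵀ * P + Mᵀ * S * M
      = (Mᵀ * Nᵀ) * P * M + Mᵀ * P * (N * M) + Mᵀ * S * M := by
        rw [hMN, hNM, Matrix.one_mul, Matrix.mul_one]
    _ = Mᵀ * (P * N + Nᵀ * P + S) * M := by noncomm_ring
    _ = 0 := by rw [hP, Matrix.mul_zero, Matrix.zero_mul]

theorem dotProduct_mulVec_mulVec_self {α : Type*} [CommSemiring α]
    (M : Matrix κ ι α) (S : Matrix κ κ α) (v : ι → α) :
    (M *ᵥ v) ⬝ᵥ S *ᵥ (M *ᵥ v) = v ⬝ᵥ (Mᵀ * S * M) *ᵥ v := by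
  rw [← mulVec_mulVec, ← mulVec_mulVec, dotProduct_transpose_mulVec, dotProduct_comm]

end Lyapunov

theorem IsStabilizing.inv_mul_mul_inv_mul_eq_one {n m : ℕ} {A : Matrix (Fin n) (Fin n) ℝ}
    {B : Matrix (Fin n) (Fin m) ℝ} {K : Matrix (Fin m) (Fin n) ℝ} (hK : IsStabilizing A B K) :
    A⁻¹ * (1 + B * K) * ((1 + B * K)⁻¹ * A) = 1 := by
  have hBK := (isUnit_iff_isUnit_det _).1 hK.1
  have hA : IsUnit A := by
    simpa only [mul_nonsing_inv_cancel_left _ _ hBK] using hK.1.mul hK.2.isUnit_s4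
  rw [Matrix.mul_assoc, mul_nonsing_inv_cancel_left _ _ hBK,
    nonsing_inv_mul _ ((isUnit_iff_isUnit_det _).1 hA)]

theorem value_function_integral_general {n m : ℕ} {A : Matrix (Fin n) (Fin n) ℝ}
    {B : Matrix (Fin n) (Fin m) ℝ} {Q : Matrix (Fin n) (Fin n) ℝ} {R : Matrix (Fin m) (Fin m) ℝ}
    {K : Matrix (Fin m) (Fin n) ℝ} {P : Matrix (Fin n) (Fin n) ℝ}
    (hK : IsStabilizing A B K) (hPE : PolicyEval A B Q R K P) {x : ℝ → Fin n → ℝ} {t : ℝ}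
    (hx : ∀ τ ≥ t, HasDerivAt x (((1 + B * K)⁻¹ * A) *ᵥ x τ) τ) :
    IntegrableOn
      (fun τ => deriv x τ ⬝ᵥ (Q + Kᵀ * R * K) *ᵥ deriv x τ) (Set.Ioi t) ∧
    ∫ τ in Set.Ioi t, deriv x τ ⬝ᵥ (Q + Kᵀ * R * K) *ᵥ deriv x τ = x t ⬝ᵥ P *ᵥ x t := by
  set M := (1 + B * K)⁻¹ * A
  have hlyap : P * M + Mᵀ * P + Mᵀ * (Q + Kᵀ * R * K) * M = 0 :=
    lyapunov_of_inverse_lyapunov hK.inv_mul_mul_inv_mul_eq_one (by rw [← add_assoc]; exact hPE)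
  have hdecay : HasExpDecay x := hK.2.hasExpDecay ((eventually_ge_atTop t).mono hx)
  have hcost : Set.EqOn (fun τ => deriv x τ ⬝ᵥ (Q + Kᵀ * R * K) *ᵥ deriv x τ)
      (fun τ => x τ ⬝ᵥ (Mᵀ * (Q + Kᵀ * R * K) * M) *ᵥ x τ) (Set.Ioi t) := fun τ hτ => by
    simp only [(hx τ (Set.mem_Ioi.1 hτ).le).deriv, dotProduct_mulVec_mulVec_self]
  rw [integrableOn_congr_fun hcost measurableSet_Ioi, setIntegral_congr_fun measurableSet_Ioi hcost]
  exact lyapunov_integral hlyap hdecay hx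

/-- Value-function representation: if `P > 0` solves the policy-evaluation
equation for a stabilizing gain `K` and `x` is the closed-loop trajectory,
`x' = (I + BK)⁻¹ A x`, then for every `t` the improper integral
`∫ₜ^∞ x'(τ)ᵀ (Q + Kᵀ R K) x'(τ) dτ` converges and equals `x(t)ᵀ P x(t)`. -/
theorem value_function_integral {n m : ℕ} (hn : 0 < n) (hm : 0 < m)
    (A : Matrix (Fin n) (Fin n) ℝ) (B : Matrix (Fin n) (Fin m) ℝ)
    (Q : Matrix (Fin n) (Fin n) ℝ) (R : Matrix (Fin m) (Fin m) ℝ)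
    (hA : IsUnit A) (hQ : Q.PosSemidef) (hR : R.PosDef)
    (K : Matrix (Fin m) (Fin n) ℝ) (P : Matrix (Fin n) (Fin n) ℝ)
    (hK : IsStabilizing A B K) (hP : P.PosDef)
    (hPE : PolicyEval A B Q R K P)
    (x : ℝ → Fin n → ℝ)
    (hx : ∀ t : ℝ, HasDerivAt x (((1 + B * K)⁻¹ * A).mulVec (x t)) t)
    (t : ℝ) :
    IntegrableOn
      (fun τ => deriv x τ ⬝ᵥ (Q + Kᵀ * R * K).mulVec (deriv x τ)) (Set.Ioi t) ∧
    ∫ τ in Set.Ioi t, deriv x τ ⬝ᵥ (Q + Kᵀ * R * K).mulVec (deriv x τ) =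
      x t ⬝ᵥ P.mulVec (x t) :=
  value_function_integral_general hK hPE fun τ _ => hx τ
end
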